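/- Let a, b be equivalence relations on a set Ω and let x, y ⊆ Ω with y transversal to a, y transversal to b, and x transversal to b. Let p : Ω → Ω satisfy p ω ∈ x and b (p ω) ω for all ω (projection onto x along b), and q : Ω → Ω satisfy q ω ∈ y and a (q ω) ω for all ω (projection onto y along a). Then: (i) the canonical kernel q ∘ p restricts to a bijection of y onto y if and only if x is transversal to a; (ii) if x is transversal to a, and p' : Ω → Ω satisfies p' ω ∈ x ∧ a (p' ω) ω, q' : Ω → Ω satisfies q' ω ∈ y ∧ b (q' ω) ω, then for every η ∈ y, q'(p'(q(p η))) = η, i.e. the inverse of the canonical kernel B^{axb}_y is B^{bax}_y. -/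

import Mathlib

/-!
Transversality of `x` and `y` to `b` makes `p` restrict to a bijection `y → x`, since every point
of `x` is `p η` for the element `η` of `y` in its `b`-class. Hence `q ∘ p` is a bijection of `y`
exactly when `q` restricts to a bijection `x → y`. As `y` meets each `a`-class exactly once, this
says that `x` meets each `a`-class exactly once. In that case the projection onto `x` along `a`
inverts `q` on `x`, and the projection onto `y` along `b` inverts `p` on `y`, which gives the
formula for the inverse kernel.
-/

/-- `x` is transversal to `a`: it contains exactly one element of each `a`-class. -/
def Transversal {Ω : Type*} (a : Ω → Ω → Prop) (x : Set Ω) : Prop :=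
  ∀ ω, ∃! ξ, ξ ∈ x ∧ a ξ ω

theorem Transversal.eq_of_rel {Ω : Type*} {a : Ω → Ω → Prop} {x : Set Ω} (ha : Equivalence a)
    (h : Transversal a x) {u v : Ω} (hu : u ∈ x) (hv : v ∈ x) (huv : a u v) : u = v :=
  (h v).unique ⟨hu, huv⟩ ⟨hv, ha.refl v⟩

/-- The projection onto `x` along `b` maps any transversal `y` of `b` bijectively onto `x`. -/
theorem Transversal.bijOn_projection {Ω : Type*} {b : Ω → Ω → Prop} {x y : Set Ω}
    (hb : Equivalence b) (hxb : Transversal b x) (hyb : Transversal b y)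
    {p : Ω → Ω} (hp : ∀ ω, p ω ∈ x ∧ b (p ω) ω) : Set.BijOn p y x := by
  refine ⟨fun η _ => (hp η).1, fun η hη η' hη' h => ?_, fun ξ hξ => ?_⟩
  · have hr : b (p η) η' := h ▸ (hp η').2
    exact hyb.eq_of_rel hb hη hη' (hb.trans (hb.symm (hp η).2) hr)
  · obtain ⟨η, ⟨hη, hηξ⟩, -⟩ := hyb ξ
    exact ⟨η, hη, hxb.eq_of_rel hb (hp η).1 hξ (hb.trans (hp η).2 hηξ)⟩

theorem canonicalKernel_bijective_iff {Ω : Type*} (a b : Ω → Ω → Prop)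
    (ha : Equivalence a) (hb : Equivalence b)
    (x y : Set Ω)
    (hya : Transversal a y) (hyb : Transversal b y) (hxb : Transversal b x)
    (p : Ω → Ω) (hp : ∀ ω, p ω ∈ x ∧ b (p ω) ω)
    (q : Ω → Ω) (hq : ∀ ω, q ω ∈ y ∧ a (q ω) ω) :
    (Set.BijOn (q ∘ p) y y ↔ Transversal a x) ∧
    (Transversal a x →
      ∀ p' : Ω → Ω, (∀ ω, p' ω ∈ x ∧ a (p' ω) ω) →
      ∀ q' : Ω → Ω, (∀ ω, q' ω ∈ y ∧ b (q' ω) ω) →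
      ∀ η ∈ y, q' (p' (q (p η))) = η) := by
  have hpb := hxb.bijOn_projection hb hyb hp
  refine ⟨⟨fun h ω => ?_, fun hxa => (hya.bijOn_projection ha hxa hq).comp hpb⟩, ?_⟩
  · obtain ⟨η, hη, hηω⟩ := h.surjOn (hq ω).1
    have hr : a (q (p η)) ω := by
      have := (hq ω).2
      rwa [← hηω] at this
    have hpω : a (p η) ω := ha.trans (ha.symm (hq (p η)).2) hr
    refine ⟨p η, ⟨(hp η).1, hpω⟩, ?_⟩
    rintro ξ ⟨hξ, hξω⟩
    obtain ⟨η', hη', rfl⟩ := hpb.surjOn hξ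
    -- `p η'` and `p η` are `a`-related, so `q` sends them to the same point of `y`.
    have hqq : q (p η') = q (p η) :=
      hya.eq_of_rel ha (hq _).1 (hq _).1
        (ha.trans (hq _).2 (ha.trans hξω (ha.symm hr)))
    rw [h.injOn hη' hη hqq]
  · intro hxa p' hp' q' hq' η hη
    have h1 : p' (q (p η)) = p η :=
      hxa.eq_of_rel ha (hp' _).1 (hp η).1 (ha.trans (hp' _).2 (hq _).2)
    rw [h1]
    exact hyb.eq_of_rel hb (hq' _).1 hη (hb.trans (hq' _).2 (hp η).2)
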